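/- Let ε ∈ (0,1) be irrational with continued fraction expansion ε = [0; a_1, a_2, …], let ℓ satisfy max{ε, 1−ε} < ℓ < 1, and let x0 ∈ [0,ℓ). If w is a nonempty finite word over {A,B,C} and j ∈ ℕ is such that the j-th power w^j (the concatenation of j copies of w) is a factor of the 3iet word u_{ε,ℓ,x0}, then j ≤ 2 + sup_{n} a_n. -/

import Mathlib

/-!
Modulo `1`, the orbit of `x` under the three-interval exchange is a subsequence of the rotation
orbit `k ↦ x - k ε`: a step on the letter `A` or `C` advances the rotation by one, a step on `B`
by two. If the coding of `x` starts with `w ^ (j + 1)`, then from each of the times `0, …, j |w|`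
the next `|w|` steps of the exchange make up one and the same displacement `D = r - q ε`, where
`q = |w| + |w|_B`. Hence the first `j q + 1` points `z ∈ [0, 1)` of the rotation orbit, including
those skipped by the `B`-steps, all satisfy `z + D ∈ [0, 1)`: they avoid an arc of length `|D|`.

Let `q_n ≤ q < q_{n+1}` be consecutive denominators of convergents. By best approximation,
`|D| ≥ |q_n ε - p_n|`. On the other hand, `q_n + q_{n+1}` consecutive points of the rotation meet
every half-open arc of length `|q_n ε - p_n|`, so
`j q < q_n + q_{n+1} ≤ (a_{n+1} + 2) q_n ≤ (a_{n+1} + 2) q`, that is, `j + 1 ≤ a_{n+1} + 2`.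
-/

/-- The alphabet of 3iet words. -/
inductive L3 | A | B | C
deriving DecidableEq, Inhabited

/-- The three-interval exchange transformation `T_{ε,ℓ}`. -/
noncomputable def T3 (ε ℓ : ℝ) (x : ℝ) : ℝ :=
  if x < ℓ - 1 + ε then x + 1 - ε
  else if x < ε then x + 1 - 2*ε
  else x - ε

/-- The 3iet word `u_{ε,ℓ,x0}` coding the orbit of `x0` under `T_{ε,ℓ}`. -/
noncomputable def u3 (ε ℓ x0 : ℝ) (n : ℕ) : L3 :=
  if (T3 ε ℓ)^[n] x0 < ℓ - 1 + ε then L3.A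
  else if (T3 ε ℓ)^[n] x0 < ε then L3.B
  else L3.C

/-- The two-interval exchange transformation `T_ε`. -/
noncomputable def T2 (ε : ℝ) (x : ℝ) : ℝ := if x < ε then x + 1 - ε else x - ε

/-- The Sturmian word `u_{ε,x0}` of slope `ε` coding the orbit of `x0` under `T_ε`
(letter `0` is `false`, letter `1` is `true`). -/
noncomputable def u2 (ε x0 : ℝ) (n : ℕ) : Bool := if (T2 ε)^[n] x0 < ε then false else true

/-- `w` is a factor of the infinite word `u`. -/
def IsFactor {α : Type*} (w : List α) (u : ℕ → α) : Prop :=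
  ∃ i : ℕ, w = (List.range w.length).map fun j => u (i + j)

/-- The prefix of length `m` of the periodic infinite word `www⋯`;
for `|w| ≤ m` this is the fractional power `w^{m/|w|}`. -/
def powPrefix {α : Type*} [Inhabited α] (w : List α) (m : ℕ) : List α :=
  (List.range m).map fun j => w.getD (j % w.length) default

/-- The index of the factor `w` in the infinite word `u`:
`sup {r ∈ ℚ, r ≥ 1, r|w| ∈ ℕ | w^r is a factor of u}`, as an element of `ℝ ∪ {+∞}`. -/
noncomputable def factorIndex {α : Type*} [Inhabited α] (u : ℕ → α) (w : List α) : EReal :=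
  sSup {x : EReal | ∃ m : ℕ, w.length ≤ m ∧ IsFactor (powPrefix w m) u ∧
    x = (((m : ℝ) / (w.length : ℝ) : ℝ) : EReal)}

/-- The index of the infinite word `u`: `sup {ind(w) | w a nonempty factor of u}`. -/
noncomputable def wordIndex {α : Type*} [Inhabited α] (u : ℕ → α) : EReal :=
  sSup {x : EReal | ∃ w : List α, w ≠ [] ∧ IsFactor w u ∧ x = factorIndex u w}

/-- The Gauss map `x ↦ {1/x}`. -/
noncomputable def gaussMap (x : ℝ) : ℝ := Int.fract x⁻¹

/-- `cfa ε n` is the partial quotient `a_{n+1}` of the continued fraction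
expansion `ε = [0; a₁, a₂, a₃, …]` of the irrational `ε ∈ (0,1)`. -/
noncomputable def cfa (ε : ℝ) (n : ℕ) : ℕ := ⌊(gaussMap^[n] ε)⁻¹⌋₊

/-- The morphism `σ01 : A ↦ 0, B ↦ 01, C ↦ 1`. -/
def sigma01 : L3 → List Bool
  | L3.A => [false]
  | L3.B => [false, true]
  | L3.C => [true]

/-- The morphism `σ10 : A ↦ 0, B ↦ 10, C ↦ 1`. -/
def sigma10 : L3 → List Bool
  | L3.A => [false]
  | L3.B => [true, false]
  | L3.C => [true]

/-- The image `φ(u₀)φ(u₁)φ(u₂)⋯` of an infinite word `u` under a (nonerasing) morphism `φ`. -/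
def morphWord (φ : L3 → List Bool) (u : ℕ → L3) (m : ℕ) : Bool :=
  ((List.range (m+1)).flatMap fun k => φ (u k)).getD m false

/-- `u` is a uniformly recurrent infinite word: every factor occurs infinitely often
with bounded gaps (every window of some length `R` contains an occurrence). -/
def UniformlyRecurrent {α : Type*} (u : ℕ → α) : Prop :=
  ∀ w : List α, IsFactor w u → ∃ R : ℕ, ∀ i : ℕ, ∃ j : ℕ, i ≤ j ∧ j < i + R ∧
    w = (List.range w.length).map fun t => u (j + t)

/-- `u` is eventually periodic. -/
def EventuallyPeriodic {α : Type*} (u : ℕ → α) : Prop :=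
  ∃ N p : ℕ, 0 < p ∧ ∀ n : ℕ, N ≤ n → u (n + p) = u n

/-- The standard words of `ε = [0; a₁, a₂, …]`, with the index shifted by one:
`sw ε 0 = s₋₁ = 1`, `sw ε 1 = s₀ = 0`, `sw ε 2 = s₁ = s₀^{a₁-1} s₋₁`, and
`sw ε (n+3) = s_{n+2} = s_{n+1}^{a_{n+2}} s_n`. -/
noncomputable def sw (ε : ℝ) : ℕ → List Bool
  | 0 => [true]
  | 1 => [false]
  | 2 => (List.replicate (cfa ε 0 - 1) ([false] : List Bool)).flatten ++ [true]
  | (n+3) => (List.replicate (cfa ε (n+1)) (sw ε (n+2))).flatten ++ sw ε (n+1)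

/-- Denominators of the convergents of `ε`, shifted by one: `qq ε 0 = q₋₁ = 0`,
`qq ε 1 = q₀ = 1`, and `qq ε (n+2) = q_{n+1} = a_{n+1} q_n + q_{n-1}`. -/
noncomputable def qq (ε : ℝ) : ℕ → ℕ
  | 0 => 0
  | 1 => 1
  | (n+2) => cfa ε n * qq ε (n+1) + qq ε n

/-- `u` is a 3iet word. -/
def Is3ietWord (u : ℕ → L3) : Prop :=
  ∃ ε ℓ x0 : ℝ, Irrational ε ∧ 0 < ε ∧ ε < 1 ∧ max ε (1 - ε) < ℓ ∧ ℓ < 1 ∧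
    x0 ∈ Set.Ico 0 ℓ ∧ u = u3 ε ℓ x0

/-- `v` is a Sturmian word. -/
def IsSturmianWord (v : ℕ → Bool) : Prop :=
  ∃ ε x0 : ℝ, Irrational ε ∧ 0 < ε ∧ ε < 1 ∧ x0 ∈ Set.Ico (0:ℝ) 1 ∧ v = u2 ε x0

/-- The infinite binary word `v1` is amicable with `v2` (`v1 ∝ v2`). -/
def AmicableInf (v1 v2 : ℕ → Bool) : Prop :=
  ∃ w : ℕ → L3, v1 = morphWord sigma01 w ∧ v2 = morphWord sigma10 w

/-- The morphism `Φ_k : A ↦ 0, B ↦ 01^{k+1}, C ↦ 01^k`. -/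
def Phi (k : ℕ) : L3 → List Bool
  | L3.A => [false]
  | L3.B => false :: List.replicate (k+1) true
  | L3.C => false :: List.replicate k true

/-- The infinite word `B₀B₁B₂⋯` obtained by concatenating the sequence of
(nonempty) blocks `B`. -/
def concatOfBlocks (B : ℕ → List Bool) (m : ℕ) : Bool :=
  ((List.range (m+1)).flatMap B).getD m false

/-! ### Continued fractions -/

section ContinuedFractions

variable {ε : ℝ}

/-- Numerators of the convergents of `ε`, with the same index shift as `qq`:
`pp ε 0 = p₋₁ = 1` and `pp ε 1 = p₀ = 0`. -/
noncomputable def pp (ε : ℝ) : ℕ → ℕ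
  | 0 => 1
  | 1 => 0
  | (n + 2) => cfa ε n * pp ε (n + 1) + pp ε n

/-- The approximation errors `|q ε - p|` of the convergents, with the same index shift as `qq`,
encoded as products of iterates of the Gauss map. -/
noncomputable def convError (ε : ℝ) (n : ℕ) : ℝ := ∏ k ∈ Finset.range n, gaussMap^[k] ε

lemma irrational_gaussMap {x : ℝ} (hx : Irrational x) : Irrational (gaussMap x) :=
  (irrational_inv_iff.2 hx).sub_intCast _

lemma gaussMap_mem_Ioo {x : ℝ} (hx : Irrational x) : gaussMap x ∈ Set.Ioo 0 1 :=
  ⟨(Int.fract_nonneg _).lt_of_ne' (irrational_gaussMap hx).ne_zero, Int.fract_lt_one _⟩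

lemma irrational_iterate_gaussMap (hirr : Irrational ε) : ∀ n, Irrational (gaussMap^[n] ε)
  | 0 => hirr
  | n + 1 => by
    rw [Function.iterate_succ_apply']
    exact irrational_gaussMap (irrational_iterate_gaussMap hirr n)

lemma iterate_gaussMap_mem_Ioo (hirr : Irrational ε) (hε : ε ∈ Set.Ioo 0 1) :
    ∀ n, gaussMap^[n] ε ∈ Set.Ioo 0 1
  | 0 => hε
  | n + 1 => by
    rw [Function.iterate_succ_apply']
    exact gaussMap_mem_Ioo (irrational_iterate_gaussMap hirr n)

lemma inv_iterate_gaussMap (hirr : Irrational ε) (hε : ε ∈ Set.Ioo 0 1) (n : ℕ) :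
    (gaussMap^[n] ε)⁻¹ = cfa ε n + gaussMap^[n + 1] ε := by
  have hpos := (iterate_gaussMap_mem_Ioo hirr hε n).1
  rw [Function.iterate_succ_apply', cfa, natCast_floor_eq_intCast_floor (inv_pos.2 hpos).le]
  exact (Int.floor_add_fract _).symm

lemma cfa_pos (hirr : Irrational ε) (hε : ε ∈ Set.Ioo 0 1) (n : ℕ) : 0 < cfa ε n :=
  have h := iterate_gaussMap_mem_Ioo hirr hε n
  Nat.floor_pos.2 ((one_lt_inv₀ h.1).2 h.2).le

lemma convError_pos (hirr : Irrational ε) (hε : ε ∈ Set.Ioo 0 1) (n : ℕ) : 0 < convError ε n :=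
  Finset.prod_pos fun k _ => (iterate_gaussMap_mem_Ioo hirr hε k).1

lemma convError_succ (ε : ℝ) (n : ℕ) : convError ε (n + 1) = convError ε n * gaussMap^[n] ε :=
  Finset.prod_range_succ _ _

lemma convError_succ_lt (hirr : Irrational ε) (hε : ε ∈ Set.Ioo 0 1) (n : ℕ) :
    convError ε (n + 1) < convError ε n := by
  rw [convError_succ]
  exact mul_lt_of_lt_one_right (convError_pos hirr hε n) (iterate_gaussMap_mem_Ioo hirr hε n).2

lemma convError_add_two (hirr : Irrational ε) (hε : ε ∈ Set.Ioo 0 1) (n : ℕ) :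
    convError ε (n + 2) = convError ε n - cfa ε n * convError ε (n + 1) := by
  have hmul : gaussMap^[n] ε * (cfa ε n + gaussMap^[n + 1] ε) = 1 := by
    rw [← inv_iterate_gaussMap hirr hε]
    exact mul_inv_cancel₀ (iterate_gaussMap_mem_Ioo hirr hε n).1.ne'
  rw [convError_succ ε (n + 1), convError_succ ε n]
  linear_combination convError ε n * hmul

lemma qq_mul_sub_pp (hirr : Irrational ε) (hε : ε ∈ Set.Ioo 0 1) (n : ℕ) :
    qq ε n * ε - pp ε n = (-1) ^ (n + 1) * convError ε n := by
  induction n using Nat.twoStepInduction with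
  | zero => simp [qq, pp, convError]
  | one => simp [qq, pp, convError]
  | more n ih ih' =>
    rw [convError_add_two hirr hε]
    simp only [qq, pp]
    push_cast
    linear_combination (cfa ε n : ℝ) * ih' + ih

lemma qq_mul_pp_sub (ε : ℝ) (n : ℕ) :
    (qq ε (n + 1) : ℤ) * pp ε n - qq ε n * pp ε (n + 1) = (-1) ^ n := by
  induction n with
  | zero => simp [qq, pp]
  | succ n ih =>
    simp only [qq, pp]
    push_cast
    linear_combination -ih

lemma qq_succ_pos (hirr : Irrational ε) (hε : ε ∈ Set.Ioo 0 1) : ∀ n, 0 < qq ε (n + 1)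
  | 0 => one_pos
  | n + 1 => Nat.add_pos_left (Nat.mul_pos (cfa_pos hirr hε n) (qq_succ_pos hirr hε n)) _

lemma qq_add_qq_succ_le (hirr : Irrational ε) (hε : ε ∈ Set.Ioo 0 1) (n : ℕ) :
    qq ε (n + 1) + qq ε n ≤ qq ε (n + 2) :=
  Nat.add_le_add_right (Nat.le_mul_of_pos_left _ (cfa_pos hirr hε n)) _

lemma qq_le_qq_succ (hirr : Irrational ε) (hε : ε ∈ Set.Ioo 0 1) : ∀ n, qq ε n ≤ qq ε (n + 1)
  | 0 => zero_le_one
  | n + 1 => (Nat.le_add_right _ _).trans (qq_add_qq_succ_le hirr hε n)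

lemma le_qq_succ (hirr : Irrational ε) (hε : ε ∈ Set.Ioo 0 1) : ∀ n, n ≤ qq ε (n + 1)
  | 0 => zero_le_one
  | 1 => qq_succ_pos hirr hε 1
  | n + 2 =>
    (Nat.add_le_add (le_qq_succ hirr hε (n + 1)) (qq_succ_pos hirr hε n)).trans
      (qq_add_qq_succ_le hirr hε (n + 1))

lemma exists_qq_le_and_lt_qq (hirr : Irrational ε) (hε : ε ∈ Set.Ioo 0 1) {q : ℕ} (hq : 0 < q) :
    ∃ n, qq ε (n + 1) ≤ q ∧ q < qq ε (n + 2) := by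
  by_contra! h
  have hle : ∀ n, qq ε (n + 1) ≤ q := fun n => Nat.rec hq h n
  exact absurd (le_qq_succ hirr hε (q + 1)) (by have := hle (q + 1); omega)

/-- Expand `(s, r)` in the basis `(q, p)`, `(q', p')` of `ℤ²`. The bounds on `s` force the two
coordinates to have opposite signs, so that the two contributions to `s θ - r` add up. -/
lemma abs_mul_sub_le_of_isUnit_det {R : Type*} [CommRing R] [LinearOrder R]
    [IsStrictOrderedRing R] {θ : R} {p q p' q' : ℤ} (hq : 0 ≤ q)
    (hdet : IsUnit (q' * p - q * p')) (hsign : (q * θ - p) * (q' * θ - p') ≤ 0)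
    {s : ℤ} (hs : 0 < s) (hsq : s < q') (r : ℤ) : |q * θ - p| ≤ |s * θ - r| := by
  obtain ⟨x, y, rfl, rfl⟩ : ∃ x y : ℤ, s = x * q + y * q' ∧ r = x * p + y * p' := by
    have hd := Int.isUnit_mul_self hdet
    refine ⟨(q' * p - q * p') * (q' * r - p' * s), (q' * p - q * p') * (p * s - q * r), ?_, ?_⟩
    · linear_combination -s * hd
    · linear_combination -r * hd
  have hx : x ≠ 0 := by
    rintro rfl
    have hlt : y * q' < 1 * q' := by linarith
    have hy : y < 1 := lt_of_mul_lt_mul_right hlt (hs.trans hsq).le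
    nlinarith
  have hxy : x * y ≤ 0 := by
    by_contra! hpos
    rcases pos_and_pos_or_neg_and_neg_of_mul_pos hpos with ⟨hx, hy⟩ | ⟨hx, hy⟩ <;> nlinarith
  have hsame : 0 ≤ (x * (q * θ - p)) * (y * (q' * θ - p')) := by
    have hxy' : (x : R) * y ≤ 0 := mod_cast hxy
    linarith [mul_nonneg_of_nonpos_of_nonpos hxy' hsign]
  calc |q * θ - p| ≤ |(x : R)| * |q * θ - p| :=
        le_mul_of_one_le_left (abs_nonneg _) (mod_cast Int.one_le_abs hx)
    _ = |x * (q * θ - p)| := (abs_mul _ _).symm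
    _ ≤ |x * (q * θ - p) + y * (q' * θ - p')| := by
        rw [(abs_add_eq_add_abs_iff _ _).2 (mul_nonneg_iff.1 hsame)]
        exact le_add_of_nonneg_right (abs_nonneg _)
    _ = |((x * q + y * q' : ℤ) : R) * θ - (x * p + y * p' : ℤ)| := by
        congr 1
        push_cast
        ring

lemma convError_le_abs_mul_sub (hirr : Irrational ε) (hε : ε ∈ Set.Ioo 0 1) (n : ℕ)
    {q : ℤ} (hq : 0 < q) (hqn : q < qq ε (n + 1)) (r : ℤ) : convError ε n ≤ |q * ε - r| := by
  have he := qq_mul_sub_pp hirr hε n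
  have he' := qq_mul_sub_pp hirr hε (n + 1)
  have hpos := convError_pos hirr hε n
  have hpos' := convError_pos hirr hε (n + 1)
  have hdet : IsUnit ((qq ε (n + 1) : ℤ) * pp ε n - qq ε n * pp ε (n + 1)) := by
    rw [qq_mul_pp_sub]
    exact isUnit_one.neg.pow n
  have hsign : (qq ε n * ε - pp ε n) * (qq ε (n + 1) * ε - pp ε (n + 1)) ≤ 0 := by
    have hsq : ((-1 : ℝ) ^ (n + 1)) ^ 2 = 1 := by
      rw [pow_right_comm, neg_one_sq, one_pow]
    rw [he, he', pow_succ _ (n + 1)]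
    linear_combination (mul_pos hpos hpos').le - convError ε n * convError ε (n + 1) * hsq
  calc convError ε n = |qq ε n * ε - pp ε n| := by
        rw [he, abs_mul, abs_neg_one_pow, one_mul, abs_of_pos hpos]
    _ ≤ |q * ε - r| := mod_cast
        abs_mul_sub_le_of_isUnit_det (Int.natCast_nonneg _) hdet (mod_cast hsign) hq hqn r

end ContinuedFractions

/-! ### Rotations -/

section Rotations

variable {R : Type*} [CommRing R] [LinearOrder R] [IsStrictOrderedRing R] [FloorRing R]

/-- Moving up by `s` without increasing the fractional part means passing an integer. -/
lemma fract_add_lt_of_fract_add_le {a s : R} (hs : 0 < s)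
    (h : Int.fract (a + s) ≤ Int.fract a) : Int.fract (a + s) < s := by
  have hfloor : ⌊a⌋ < ⌊a + s⌋ := by
    refine (Int.floor_mono (by linarith)).lt_of_ne fun heq => ?_
    rw [Int.fract, Int.fract, heq] at h
    linarith
  have := Int.floor_lt.1 hfloor
  rw [Int.fract]
  linarith

/-- From the point with the largest fractional part, either `q` steps forward or `q'` steps backward
are available, and both move up by at most `δ`, hence into `[0, δ)`. -/
lemma exists_fract_add_mul_lt {θ δ δ' : R} {q q' : ℕ} {r r' : ℤ} (hq : 0 < q) (hδ' : 0 < δ')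
    (hle : δ' ≤ δ) (h : q * θ = r + δ) (h' : q' * θ = r' - δ') (x : R) :
    ∃ k < q + q', Int.fract (x + k * θ) < δ := by
  obtain ⟨k, hk, hmax⟩ := Finset.exists_max_image (Finset.range (q + q'))
    (fun k => Int.fract (x + k * θ)) ⟨0, Finset.mem_range.2 (by omega)⟩
  simp only [Finset.mem_range] at hk hmax
  have move_up : ∀ m < q + q', ∀ s, 0 < s → s ≤ δ →
      Int.fract (x + m * θ) = Int.fract (x + k * θ + s) →
      ∃ i < q + q', Int.fract (x + i * θ) < δ := fun m hm s hs hsδ heq =>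
    ⟨m, hm, heq ▸ (fract_add_lt_of_fract_add_le hs (heq ▸ hmax m hm)).trans_le hsδ⟩
  by_cases hkq : k < q'
  · refine move_up (k + q) (by omega) δ (hδ'.trans_le hle) le_rfl ?_
    rw [← Int.fract_add_intCast (x + k * θ + δ) r]
    push_cast
    congr 1
    linear_combination h
  · obtain ⟨m, rfl⟩ := Nat.exists_eq_add_of_le (not_lt.1 hkq)
    refine move_up m (by omega) δ' hδ' hle ?_
    rw [← Int.fract_sub_intCast (x + (q' + m : ℕ) * θ + δ') r']
    push_cast
    congr 1
    linear_combination -h'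

variable {ε : ℝ}

lemma exists_fract_sub_mul_lt (hirr : Irrational ε) (hε : ε ∈ Set.Ioo 0 1) (n : ℕ) (x : ℝ) :
    ∃ k < qq ε (n + 1) + qq ε (n + 2), Int.fract (x - k * ε) < convError ε (n + 1) := by
  have he := qq_mul_sub_pp hirr hε (n + 1)
  have he' := qq_mul_sub_pp hirr hε (n + 2)
  have hq := qq_succ_pos hirr hε n
  have hpos := convError_pos hirr hε (n + 2)
  have hle := (convError_succ_lt hirr hε (n + 1)).le
  simp only [pow_succ] at he he'
  rcases n.even_or_odd with hn | hn <;> rw [hn.neg_one_pow] at he he'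
  · -- Here `qq ε (n + 1)` rotations by `ε` move up, so time is reversed.
    set N := qq ε (n + 1) + qq ε (n + 2)
    obtain ⟨k, hk, hlt⟩ := exists_fract_add_mul_lt (θ := ε) (q' := qq ε (n + 2))
      (r := pp ε (n + 1)) (r' := pp ε (n + 2)) hq hpos hle (by push_cast; linear_combination he)
      (by push_cast; linear_combination he') (x - (N - 1) * ε)
    have heq : x - (N - 1 - k : ℕ) * ε = x - (N - 1) * ε + k * ε := by
      rw [Nat.sub_sub, Nat.cast_sub (by omega)]
      push_cast
      ring
    exact ⟨N - 1 - k, by omega, heq ▸ hlt⟩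
  · simpa only [mul_neg, ← sub_eq_add_neg] using
      exists_fract_add_mul_lt (θ := -ε) (q' := qq ε (n + 2)) (r := -pp ε (n + 1))
        (r' := -pp ε (n + 2)) hq hpos hle (by push_cast; linear_combination -he)
        (by push_cast; linear_combination -he') x

lemma exists_fract_sub_mul_add_notMem_Ico (hirr : Irrational ε) (hε : ε ∈ Set.Ioo 0 1) {n : ℕ}
    {D : ℝ} (hD : convError ε (n + 1) ≤ |D|) (x : ℝ) :
    ∃ k < qq ε (n + 1) + qq ε (n + 2), Int.fract (x - k * ε) + D ∉ Set.Ico 0 1 := by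
  rcases le_or_gt 0 D with hD0 | hD0
  · rw [abs_of_nonneg hD0] at hD
    obtain ⟨k, hk, hlt⟩ := exists_fract_sub_mul_lt hirr hε n (x + D)
    refine ⟨k, hk, fun hmem => ?_⟩
    have hfract : Int.fract (x + D - k * ε) = Int.fract (x - k * ε) + D :=
      Int.fract_eq_iff.2 ⟨hmem.1, hmem.2, ⌊x - k * ε⌋, by rw [Int.fract]; ring⟩
    linarith [Int.fract_nonneg (x - k * ε)]
  · rw [abs_of_neg hD0] at hD
    obtain ⟨k, hk, hlt⟩ := exists_fract_sub_mul_lt hirr hε n x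
    exact ⟨k, hk, fun hmem => by linarith [hmem.1]⟩

end Rotations

/-! ### Three-interval exchanges -/

section Exchange

/-- The number of rotation steps performed by one step of the exchange: the exchange acts on the
interval of the letter `X` by `x ↦ x - stepTime X * ε + stepInt X`. -/
def stepTime : L3 → ℕ
  | L3.A => 1
  | L3.B => 2
  | L3.C => 1

/-- The integer part of the translation performed by one step of the exchange; see `stepTime`. -/
def stepInt : L3 → ℤ
  | L3.A => 1
  | L3.B => 1
  | L3.C => 0

/-- The number of rotation steps performed by the first `k` steps of an exchange with coding `u`. -/
def rotTime (u : ℕ → L3) (k : ℕ) : ℕ := ∑ i ∈ Finset.range k, stepTime (u i)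

/-- The integer translation accumulated by the first `k` steps of an exchange with coding `u`. -/
def rotInt (u : ℕ → L3) (k : ℕ) : ℤ := ∑ i ∈ Finset.range k, stepInt (u i)

lemma rotTime_succ (u : ℕ → L3) (k : ℕ) : rotTime u (k + 1) = rotTime u k + stepTime (u k) :=
  Finset.sum_range_succ _ _

lemma rotTime_pos (u : ℕ → L3) {p : ℕ} (hp : 0 < p) : 0 < rotTime u p :=
  Finset.sum_pos (fun i _ => by cases u i <;> simp [stepTime]) ⟨0, by simpa using hp⟩

lemma exists_rotTime_eq_or_eq_B (u : ℕ → L3) {N n : ℕ} (hn : n ≤ rotTime u N) :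
    ∃ t ≤ N, n = rotTime u t ∨ t < N ∧ u t = L3.B ∧ n = rotTime u t + 1 := by
  induction N with
  | zero => exact ⟨0, le_rfl, .inl (Nat.le_zero.1 hn)⟩
  | succ N ih =>
    by_cases hle : n ≤ rotTime u N
    · obtain ⟨t, ht, hcase⟩ := ih hle
      exact ⟨t, by omega, hcase.imp_right fun h => ⟨by omega, h.2⟩⟩
    · by_cases heq : n = rotTime u (N + 1)
      · exact ⟨N + 1, le_rfl, .inl heq⟩
      · rw [rotTime_succ] at hn heq
        refine ⟨N, by omega, .inr ⟨by omega, ?_⟩⟩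
        cases hu : u N <;> simp only [hu, stepTime] at hn heq
        case B => exact ⟨rfl, by omega⟩
        all_goals omega

section LocalPeriod

variable {α : Type*} {u : ℕ → α} {p N : ℕ}

lemma sum_range_add_of_local_period {M : Type*} [AddCommMonoid M] (f : α → M)
    (hper : ∀ t < N, u (t + p) = u t) {t : ℕ} (ht : t ≤ N) :
    ∑ k ∈ Finset.range (t + p), f (u k) =
      ∑ k ∈ Finset.range t, f (u k) + ∑ k ∈ Finset.range p, f (u k) := by
  rw [add_comm t, Finset.sum_range_add, add_comm]
  congr 1
  refine Finset.sum_congr rfl fun k hk => ?_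
  rw [add_comm p, hper k ((Finset.mem_range.1 hk).trans_le ht)]

lemma exists_local_period_of_isFactor_replicate {w : List α} {j : ℕ}
    (hfac : IsFactor (List.replicate (j + 1) w).flatten u) :
    ∃ i, ∀ t < j * w.length, u (t + w.length + i) = u (t + i) := by
  obtain ⟨i, hi⟩ := hfac
  set v := (List.replicate j w).flatten with hv
  have hvlen : v.length = j * w.length := by simp [hv]
  have hwv : (List.replicate (j + 1) w).flatten = w ++ v := by simp [hv, List.replicate_succ]
  have hvw : (List.replicate (j + 1) w).flatten = v ++ w := by simp [hv, List.replicate_succ']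
  have hget : ∀ s < j * w.length + w.length, (v ++ w)[s]? = some (u (s + i)) := by
    intro s hs
    rw [← hvw, hi, hvw, List.length_append, hvlen]
    simp [hs, add_comm i]
  refine ⟨i, fun t ht => Option.some.inj ?_⟩
  calc some (u (t + w.length + i)) = (w ++ v)[t + w.length]? := by
        rw [← hget _ (by omega), ← hvw, hwv]
    _ = v[t]? := by rw [List.getElem?_append_right (by omega), Nat.add_sub_cancel]
    _ = (v ++ w)[t]? := (List.getElem?_append_left (by omega)).symm
    _ = some (u (t + i)) := hget t (by omega)

end LocalPeriod

lemma rotTime_mul_of_local_period {u : ℕ → L3} {p j : ℕ}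
    (hper : ∀ t < j * p, u (t + p) = u t) : rotTime u (j * p) = j * rotTime u p := by
  have hmul : ∀ s ≤ j, rotTime u (s * p) = s * rotTime u p := by
    intro s
    induction s with
    | zero => simp [rotTime]
    | succ s ih =>
      intro hs
      rw [add_mul, one_mul, add_mul, one_mul, ← ih (by omega)]
      exact sum_range_add_of_local_period stepTime hper (Nat.mul_le_mul_right p (by omega))
  exact hmul j le_rfl

variable {ε ℓ x : ℝ}

lemma u3_add (ε ℓ x : ℝ) (k i : ℕ) : u3 ε ℓ x (k + i) = u3 ε ℓ ((T3 ε ℓ)^[i] x) k := by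
  simp only [u3, Function.iterate_add_apply]

lemma iterate_T3_mem_Ico_of_u3_eq_B {k : ℕ} (h : u3 ε ℓ x k = L3.B) :
    (T3 ε ℓ)^[k] x ∈ Set.Ico (ℓ - 1 + ε) ε := by
  unfold u3 at h
  split_ifs at h with h1 h2
  exact ⟨not_lt.1 h1, h2⟩

lemma mapsTo_T3 (hl : max ε (1 - ε) ≤ ℓ) (hl1 : ℓ ≤ 1) :
    Set.MapsTo (T3 ε ℓ) (Set.Ico 0 ℓ) (Set.Ico 0 ℓ) := by
  rintro x ⟨hx0, hxl⟩
  obtain ⟨_, _⟩ := max_le_iff.1 hl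
  unfold T3
  split_ifs <;> constructor <;> linarith

lemma iterate_T3_succ (ε ℓ x : ℝ) (k : ℕ) :
    (T3 ε ℓ)^[k + 1] x =
      (T3 ε ℓ)^[k] x - stepTime (u3 ε ℓ x k) * ε + stepInt (u3 ε ℓ x k) := by
  rw [Function.iterate_succ_apply', T3, u3]
  split_ifs <;> simp only [stepTime, stepInt] <;> push_cast <;> ring

lemma iterate_T3_eq (ε ℓ x : ℝ) (k : ℕ) :
    (T3 ε ℓ)^[k] x = x - rotTime (u3 ε ℓ x) k * ε + rotInt (u3 ε ℓ x) k := by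
  induction k with
  | zero => simp [rotTime, rotInt]
  | succ k ih =>
    rw [iterate_T3_succ, ih]
    simp only [rotTime, rotInt, Finset.sum_range_succ]
    push_cast
    ring

lemma fract_sub_rotTime (hl : max ε (1 - ε) ≤ ℓ) (hl1 : ℓ ≤ 1) (hx : x ∈ Set.Ico 0 ℓ) (k : ℕ) :
    Int.fract (x - rotTime (u3 ε ℓ x) k * ε) = (T3 ε ℓ)^[k] x := by
  obtain ⟨h0, h1⟩ := (mapsTo_T3 hl hl1).iterate k hx
  refine Int.fract_eq_iff.2 ⟨h0, h1.trans_le hl1, -rotInt (u3 ε ℓ x) k, ?_⟩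
  rw [iterate_T3_eq]
  push_cast
  ring

lemma fract_sub_rotTime_add_one (hl : max ε (1 - ε) ≤ ℓ) {k : ℕ} (hB : u3 ε ℓ x k = L3.B) :
    Int.fract (x - (rotTime (u3 ε ℓ x) k + 1) * ε) = (T3 ε ℓ)^[k] x + 1 - ε := by
  obtain ⟨h0, h1⟩ := iterate_T3_mem_Ico_of_u3_eq_B hB
  obtain ⟨_, _⟩ := max_le_iff.1 hl
  refine Int.fract_eq_iff.2 ⟨by linarith, by linarith, -rotInt (u3 ε ℓ x) k - 1, ?_⟩
  rw [iterate_T3_eq]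
  push_cast
  ring

variable {p N : ℕ}

lemma iterate_T3_add_of_local_period (hper : ∀ t < N, u3 ε ℓ x (t + p) = u3 ε ℓ x t) {t : ℕ}
    (ht : t ≤ N) : (T3 ε ℓ)^[t + p] x =
      (T3 ε ℓ)^[t] x + (rotInt (u3 ε ℓ x) p - rotTime (u3 ε ℓ x) p * ε) := by
  have htime : rotTime (u3 ε ℓ x) (t + p) = rotTime (u3 ε ℓ x) t + rotTime (u3 ε ℓ x) p :=
    sum_range_add_of_local_period stepTime hper ht
  have hint : rotInt (u3 ε ℓ x) (t + p) = rotInt (u3 ε ℓ x) t + rotInt (u3 ε ℓ x) p :=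
    sum_range_add_of_local_period stepInt hper ht
  rw [iterate_T3_eq, iterate_T3_eq ε ℓ x t, htime, hint]
  push_cast
  ring

lemma fract_sub_add_mem_Ico_of_local_period (hl : max ε (1 - ε) ≤ ℓ) (hl1 : ℓ ≤ 1)
    (hx : x ∈ Set.Ico 0 ℓ) (hper : ∀ t < N, u3 ε ℓ x (t + p) = u3 ε ℓ x t) {n : ℕ}
    (hn : n ≤ rotTime (u3 ε ℓ x) N) :
    Int.fract (x - n * ε) + (rotInt (u3 ε ℓ x) p - rotTime (u3 ε ℓ x) p * ε) ∈ Set.Ico 0 1 := by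
  obtain ⟨t, ht, rfl | ⟨htN, hB, rfl⟩⟩ := exists_rotTime_eq_or_eq_B _ hn
  · rw [fract_sub_rotTime hl hl1 hx, ← iterate_T3_add_of_local_period hper ht]
    exact Set.Ico_subset_Ico_right hl1 ((mapsTo_T3 hl hl1).iterate (t + p) hx)
  · have hB' : u3 ε ℓ x (t + p) = L3.B := (hper t htN).trans hB
    obtain ⟨h0, h1⟩ := iterate_T3_mem_Ico_of_u3_eq_B hB'
    rw [iterate_T3_add_of_local_period hper ht] at h0 h1
    obtain ⟨_, _⟩ := max_le_iff.1 hl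
    push_cast
    rw [fract_sub_rotTime_add_one hl hB]
    constructor <;> linarith

lemma rotTime_add_one_lt_of_local_period (hirr : Irrational ε) (hε : ε ∈ Set.Ioo 0 1)
    (hl : max ε (1 - ε) ≤ ℓ) (hl1 : ℓ ≤ 1) (hx : x ∈ Set.Ico 0 ℓ) (hp : 0 < p)
    (hper : ∀ t < N, u3 ε ℓ x (t + p) = u3 ε ℓ x t) {n : ℕ}
    (hn : rotTime (u3 ε ℓ x) p < qq ε (n + 2)) :
    rotTime (u3 ε ℓ x) N + 1 < qq ε (n + 1) + qq ε (n + 2) := by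
  have hD : convError ε (n + 1) ≤ |rotInt (u3 ε ℓ x) p - rotTime (u3 ε ℓ x) p * ε| := by
    rw [abs_sub_comm]
    exact convError_le_abs_mul_sub hirr hε (n + 1) (mod_cast rotTime_pos _ hp) (mod_cast hn) _
  obtain ⟨k, hk, hmem⟩ := exists_fract_sub_mul_add_notMem_Ico hirr hε hD x
  by_contra! hle
  exact hmem (fract_sub_add_mem_Ico_of_local_period hl hl1 hx hper (by omega))

lemma exists_lt_two_add_cfa_of_local_period (hirr : Irrational ε) (hε : ε ∈ Set.Ioo 0 1)
    (hl : max ε (1 - ε) ≤ ℓ) (hl1 : ℓ ≤ 1) (hx : x ∈ Set.Ico 0 ℓ) (hp : 0 < p) {j : ℕ}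
    (hper : ∀ t < j * p, u3 ε ℓ x (t + p) = u3 ε ℓ x t) : ∃ n, j < 2 + cfa ε n := by
  set q := rotTime (u3 ε ℓ x) p
  obtain ⟨n, hle, hlt⟩ := exists_qq_le_and_lt_qq hirr hε (rotTime_pos (u3 ε ℓ x) hp)
  refine ⟨n, lt_of_mul_lt_mul_right (a := q) ?_ q.zero_le⟩
  calc j * q = rotTime (u3 ε ℓ x) (j * p) := (rotTime_mul_of_local_period hper).symm
    _ < qq ε (n + 1) + qq ε (n + 2) :=
        (Nat.lt_succ_self _).trans
          (rotTime_add_one_lt_of_local_period hirr hε hl hl1 hx hp hper hlt)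
    _ = (1 + cfa ε n) * qq ε (n + 1) + qq ε n := by rw [qq]; ring
    _ ≤ (1 + cfa ε n) * qq ε (n + 1) + qq ε (n + 1) := by gcongr; exact qq_le_qq_succ hirr hε n
    _ = (2 + cfa ε n) * qq ε (n + 1) := by ring
    _ ≤ (2 + cfa ε n) * q := by gcongr

end Exchange

/-- integer exponents of powers of factors occurring in a 3iet word are
bounded by `2 + sup_n a_n` (the supremum taken in `ℕ ∪ {+∞}`). -/
theorem threeIet_integer_power_le
    (ε ℓ x0 : ℝ) (hirr : Irrational ε) (h0 : 0 < ε) (h1 : ε < 1)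
    (hl : max ε (1 - ε) < ℓ) (hl1 : ℓ < 1) (hx0 : x0 ∈ Set.Ico 0 ℓ)
    (w : List L3) (hw : w ≠ []) (j : ℕ)
    (hfac : IsFactor (List.replicate j w).flatten (u3 ε ℓ x0)) :
    (j : ℕ∞) ≤ 2 + ⨆ n : ℕ, (cfa ε n : ℕ∞) := by
  obtain ⟨n, hn⟩ : ∃ n, j ≤ 2 + cfa ε n := by
    rcases j with _ | j
    · exact ⟨0, Nat.zero_le _⟩
    · obtain ⟨i, hper⟩ := exists_local_period_of_isFactor_replicate hfac
      exact exists_lt_two_add_cfa_of_local_period hirr ⟨h0, h1⟩ hl.le hl1.le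
        ((mapsTo_T3 hl.le hl1.le).iterate i hx0) (List.length_pos_iff.2 hw)
        (by simpa only [← u3_add] using hper)
  calc (j : ℕ∞) ≤ 2 + (cfa ε n : ℕ∞) := mod_cast hn
    _ ≤ 2 + ⨆ n : ℕ, (cfa ε n : ℕ∞) := by gcongr; exact le_iSup (fun n => (cfa ε n : ℕ∞)) n
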